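/- Assume ν ≥ 3. Let β_{m_1,…,m_ν} be real numbers with |β_{m_1,…,m_ν}| ≤ θ for all indices, let t = (τ_{1,1},…,τ_{ν,k_ν}) be drawn from the probability distribution on ℒ with density proportional to e^{−q(t)}, set u_{m_1…m_ν} = β_{m_1,…,m_ν}(τ_{1,m_1}+⋯+τ_{ν,m_ν}), and let U = Σ_{m_1,…,m_ν} u_{m_1…m_ν}³. Then there exists a constant Γ = Γ(θ,ν,ω,R,r) > 0, depending only on θ, ν, ω, R, r, such that E[U²] ≤ Γ·k^{−ν+2}. -/

import Mathlib

open MeasureTheory Real InnerProductSpace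

noncomputable section

variable {ν : ℕ}

/-- The coordinate index set of `ℝ^d`, `d = k_1 + ⋯ + k_ν`. -/
abbrev Idx (kk : Fin ν → ℕ) : Type := Σ j : Fin ν, Fin (kk j)

/-- The multi-index set, of cardinality `n = k_1 ⋯ k_ν`. -/
abbrev MIdx (kk : Fin ν → ℕ) : Type := ∀ j : Fin ν, Fin (kk j)

/-- The ambient Euclidean space `ℝ^d`. -/
abbrev Spc (kk : Fin ν → ℕ) : Type := EuclideanSpace ℝ (Idx kk)

/-- The coordinate functional `t ↦ τ_{j,i}`. -/
def coordL (kk : Fin ν → ℕ) (p : Idx kk) : Spc kk →ₗ[ℝ] ℝ where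
  toFun t := t p
  map_add' _ _ := rfl
  map_smul' _ _ := rfl

/-- The linear functional `t ↦ ⟨a_m, t⟩ = τ_{1,m_1} + ⋯ + τ_{ν,m_ν}`. -/
def linF (kk : Fin ν → ℕ) (m : MIdx kk) : Spc kk →ₗ[ℝ] ℝ :=
  ∑ j : Fin ν, coordL kk ⟨j, m j⟩

/-- The column `a_m` of the constraint matrix `A`. -/
def colA (kk : Fin ν → ℕ) (m : MIdx kk) : Spc kk :=
  (WithLp.equiv 2 (Idx kk → ℝ)).symm (fun p => if p.2 = m p.1 then 1 else 0)

/-- The quadratic form `q(t) = (1/2) ∑_m α_m (τ_{1,m_1} + ⋯ + τ_{ν,m_ν})²`. -/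
def qform (kk : Fin ν → ℕ) (α : MIdx kk → ℝ) (t : Spc kk) : ℝ :=
  (1/2) * ∑ m : MIdx kk, α m * (linF kk m t)^2

/-- The symmetric positive semidefinite matrix `B` with `q(t) = (1/2)⟨t, Bt⟩`,
given explicitly as `B = ∑_m α_m a_m a_mᵀ`. -/
def Bmat (kk : Fin ν → ℕ) (α : MIdx kk → ℝ) : Spc kk →ₗ[ℝ] Spc kk :=
  ∑ m : MIdx kk, α m • (linF kk m).smulRight (colA kk m)

/-- The sup norm `‖t‖_∞`. -/
def supNorm (kk : Fin ν → ℕ) (t : Spc kk) : ℝ := ‖(WithLp.equiv 2 (Idx kk → ℝ)) t‖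

/-- The subspace `ℒ = {t : τ_{j,k_j} = 0 for j = 2,…,ν}`. -/
def Lsub (kk : Fin ν → ℕ) (hk : ∀ j, 0 < kk j) : Submodule ℝ (Spc kk) :=
  ⨅ (j : {j : Fin ν // (j : ℕ) ≠ 0}),
    LinearMap.ker (coordL kk ⟨j.1, ⟨kk j.1 - 1, Nat.sub_lt (hk j.1) one_pos⟩⟩)

/-- The cubic polynomial `U(t) = ∑_m (β_m (τ_{1,m_1}+⋯+τ_{ν,m_ν}))³`. -/
def Upoly (kk : Fin ν → ℕ) (β : MIdx kk → ℝ) (t : Spc kk) : ℝ :=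
  ∑ m : MIdx kk, (β m * linF kk m t)^3

/-!
Write `X m` for `linF kk m`. The density `exp (-q)` is Gaussian and `X m` is represented by the
vector `A (s m)`, where `‖A t‖ ^ 2 = 2 q(t)`: `X m t = ⟪A (s m), A t⟫`. Hence the `X m` are jointly
Gaussian with covariances `c m n = ⟪A (s m), A (s n)⟫`, and Wick's formula gives
`E[X m ^ 3 * X n ^ 3] = 9 c m m * c n n * c m n + 6 c m n ^ 3`, so `E[U ^ 2]` is an explicit double
sum over pairs of multi-indices. Most covariances are small: since `α ≥ r`, the vectors `A (s m)`
form a Bessel family with bound `1 / r`. If every variance is at most `κ` and there are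
`N = k_1 ⋯ k_ν` multi-indices, the double sum is therefore at most `15 N θ ^ 6 κ ^ 2 / r`.

The variances are small because the family is redundant: `N * X m` is a signed combination of
`∑ n, X n` and of the sums of `X n'` in which `n'` is `n` with its `j`-th entry replaced by that of
`m`. By Cauchy–Schwarz each of these is at most `√(N k ∑ n, X n ^ 2)`, which gives
`κ = (2 ν + 1) ^ 2 k / (N r)`, and `E[U ^ 2]` is of order `k ^ 2 / N`.
-/

section GaussianMoments

open ProbabilityTheory
open scoped Nat ContDiff

lemma iteratedDeriv_add_two_zero_of_deriv_eq_mul {f : ℝ → ℝ} {v : ℝ} (hf : ContDiff ℝ ∞ f)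
    (hderiv : deriv f = fun t ↦ v * (t * f t)) (n : ℕ) :
    iteratedDeriv (n + 2) f 0 = v * (n + 1) * iteratedDeriv n f 0 := by
  have leibniz : iteratedDeriv (n + 1) (fun t ↦ t * f t) 0 = (n + 1) * iteratedDeriv n f 0 := by
    rw [iteratedDeriv_fun_mul contDiffAt_fun_id (hf.contDiffAt.of_le (mod_cast le_top)),
      Finset.sum_eq_single 1]
    · simp [iteratedDeriv_one]
    · intro i _ hi
      simp [iteratedDeriv_fun_id_zero, hi]
    · simp
  rw [iteratedDeriv_succ', hderiv, iteratedDeriv_const_mul_field, leibniz, mul_assoc]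

lemma iteratedDeriv_two_mul_exp_mul_sq_div_two_zero (v : ℝ) (n : ℕ) :
    iteratedDeriv (2 * n) (fun t ↦ exp (v * t ^ 2 / 2)) 0 = (2 * n - 1)‼ * v ^ n := by
  induction n with
  | zero => simp
  | succ n ih =>
    have hderiv : deriv (fun t ↦ exp (v * t ^ 2 / 2)) = fun t ↦ v * (t * exp (v * t ^ 2 / 2)) := by
      ext t
      have hsq : HasDerivAt (fun t ↦ v * t ^ 2 / 2) (v * t) t :=
        (((hasDerivAt_pow 2 t).const_mul v).div_const 2).congr_deriv (by simp; ring)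
      rw [hsq.exp.deriv]
      ring
    have hdf : (2 * (n + 1) - 1)‼ = (2 * n + 1) * (2 * n - 1)‼ := Nat.doubleFactorial_add_one _
    rw [mul_add_one, iteratedDeriv_add_two_zero_of_deriv_eq_mul (by fun_prop) hderiv, ih,
      ← mul_add_one, hdf]
    push_cast
    ring

variable {Ω : Type*} [MeasurableSpace Ω] {P : Measure Ω} {X Y : Ω → ℝ} {v : ℝ}

lemma integrableExpSet_eq_univ_of_mgf_ne_zero (hX : ∀ t, mgf X P t ≠ 0) :
    integrableExpSet X P = Set.univ :=
  Set.eq_univ_of_forall fun t ↦ not_imp_comm.1 mgf_undef (hX t)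

lemma integrable_pow_of_mgf_eq_exp_mul_sq (hX : ∀ t, mgf X P t = exp (v * t ^ 2 / 2)) (n : ℕ) :
    Integrable (fun x ↦ X x ^ n) P := by
  refine integrable_pow_of_mem_interior_integrableExpSet ?_ n
  simp [integrableExpSet_eq_univ_of_mgf_ne_zero fun t ↦ hX t ▸ (exp_pos _).ne']

lemma integral_pow_two_mul_of_mgf_eq_exp_mul_sq (hX : ∀ t, mgf X P t = exp (v * t ^ 2 / 2))
    (n : ℕ) : ∫ x, X x ^ (2 * n) ∂P = (2 * n - 1)‼ * v ^ n := by
  have hmem : 0 ∈ interior (integrableExpSet X P) := by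
    simp [integrableExpSet_eq_univ_of_mgf_ne_zero fun t ↦ hX t ▸ (exp_pos _).ne']
  rw [← iteratedDeriv_two_mul_exp_mul_sq_div_two_zero, ← funext hX, iteratedDeriv_mgf_zero hmem]
  rfl

variable {a b c : ℝ}

lemma integrable_cube_mul_cube_and_integral_eq_of_mgf_eq
    (hXY : ∀ s t, mgf (fun x ↦ s * X x + Y x) P t =
      exp ((a * s ^ 2 + 2 * c * s + b) * t ^ 2 / 2)) :
    Integrable (fun x ↦ X x ^ 3 * Y x ^ 3) P ∧
      ∫ x, X x ^ 3 * Y x ^ 3 ∂P = 9 * a * b * c + 6 * c ^ 3 := by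
  let D (s : ℝ) (x : Ω) : ℝ := (s * X x + Y x) ^ 6 - (-s * X x + Y x) ^ 6
  have hint (s : ℝ) : Integrable (fun x ↦ (s * X x + Y x) ^ 6) P :=
    integrable_pow_of_mgf_eq_exp_mul_sq (hXY s) 6
  have hDint (s : ℝ) : Integrable (D s) P := (hint s).sub (hint (-s))
  have hmoment (s : ℝ) :
      ∫ x, (s * X x + Y x) ^ 6 ∂P = 15 * (a * s ^ 2 + 2 * c * s + b) ^ 3 := by
    simpa [Nat.doubleFactorial] using integral_pow_two_mul_of_mgf_eq_exp_mul_sq (hXY s) 3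
  have hD (s : ℝ) : ∫ x, D s x ∂P =
      15 * (a * s ^ 2 + 2 * c * s + b) ^ 3 - 15 * (a * (-s) ^ 2 + 2 * c * -s + b) ^ 3 := by
    rw [integral_sub (hint s) (hint (-s)), hmoment, hmoment]
  -- `D s x` is odd in `s`; this combination of `s = 1, 2, 3` cancels its terms in `s` and `s ^ 5`.
  have hpolar : (fun x ↦ X x ^ 3 * Y x ^ 3) = fun x ↦ (8 * D 2 x - 13 * D 1 x - D 3 x) / 960 := by
    ext x
    simp only [D]
    ring
  have h₂₁ : Integrable (fun x ↦ 8 * D 2 x - 13 * D 1 x) P :=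
    ((hDint 2).const_mul 8).sub ((hDint 1).const_mul 13)
  rw [hpolar]
  refine ⟨(h₂₁.sub (hDint 3)).div_const 960, ?_⟩
  rw [integral_div, integral_sub h₂₁ (hDint 3),
    integral_sub ((hDint 2).const_mul 8) ((hDint 1).const_mul 13), integral_const_mul,
    integral_const_mul, hD, hD, hD]
  ring

end GaussianMoments

section GaussianTilt

open ProbabilityTheory

variable {V F : Type*} [NormedAddCommGroup F] [InnerProductSpace ℝ F]

/-- The Gaussian probability measure on `V` whose density with respect to `μ` is proportional to
`exp (-‖A t‖ ^ 2 / 2)`. It is the zero measure when that density is not integrable. -/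
def gaussianTilt [AddCommGroup V] [Module ℝ V] [MeasurableSpace V] (μ : Measure V)
    (A : V →ₗ[ℝ] F) : Measure V :=
  μ.tilted fun t ↦ -(‖A t‖ ^ 2 / 2)

section RightInvariant

variable [AddCommGroup V] [Module ℝ V] [MeasurableSpace V] [MeasurableAdd V] {μ : Measure V}
  [μ.IsAddRightInvariant] [NeZero μ] {A : V →ₗ[ℝ] F}

lemma mgf_inner_map_gaussianTilt (hA : Integrable (fun t ↦ exp (-(‖A t‖ ^ 2 / 2))) μ) (s : V)
    (x : ℝ) :
    mgf (fun t ↦ ⟪A s, A t⟫_ℝ) (gaussianTilt μ A) x = exp (‖A s‖ ^ 2 * x ^ 2 / 2) := by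
  -- Completing the square: `t ↦ t - x • s` absorbs the linear term of the exponent.
  have hsq (t : V) : -(‖A t‖ ^ 2 / 2) + x * ⟪A s, A t⟫_ℝ =
      ‖A s‖ ^ 2 * x ^ 2 / 2 + -(‖A (t - x • s)‖ ^ 2 / 2) := by
    rw [map_sub, map_smul, norm_sub_sq_real, real_inner_smul_right, real_inner_comm, norm_smul,
      mul_pow, norm_eq_abs, sq_abs]
    ring
  rw [mgf, gaussianTilt, integral_exp_tilted, div_eq_iff (integral_exp_pos hA).ne']
  simp only [Pi.add_apply, hsq, exp_add, integral_const_mul]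
  rw [integral_sub_right_eq_self (fun t : V ↦ exp (-(‖A t‖ ^ 2 / 2))) (x • s)]

lemma integrable_cube_mul_cube_gaussianTilt_and_integral_eq
    (hA : Integrable (fun t ↦ exp (-(‖A t‖ ^ 2 / 2))) μ) (s u : V) :
    Integrable (fun t ↦ ⟪A s, A t⟫_ℝ ^ 3 * ⟪A u, A t⟫_ℝ ^ 3) (gaussianTilt μ A) ∧
      ∫ t, ⟪A s, A t⟫_ℝ ^ 3 * ⟪A u, A t⟫_ℝ ^ 3 ∂gaussianTilt μ A =
        9 * ‖A s‖ ^ 2 * ‖A u‖ ^ 2 * ⟪A s, A u⟫_ℝ + 6 * ⟪A s, A u⟫_ℝ ^ 3 := by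
  refine integrable_cube_mul_cube_and_integral_eq_of_mgf_eq fun y x ↦ ?_
  have hlin (t : V) : y * ⟪A s, A t⟫_ℝ + ⟪A u, A t⟫_ℝ = ⟪A (y • s + u), A t⟫_ℝ := by
    rw [map_add, map_smul, inner_add_left, real_inner_smul_left]
  have hvar : ‖A (y • s + u)‖ ^ 2 = ‖A s‖ ^ 2 * y ^ 2 + 2 * ⟪A s, A u⟫_ℝ * y + ‖A u‖ ^ 2 := by
    rw [map_add, map_smul, norm_add_sq_real, real_inner_smul_left, norm_smul, mul_pow,
      norm_eq_abs, sq_abs]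
    ring
  simp only [hlin, mgf_inner_map_gaussianTilt hA, hvar]

end RightInvariant

variable [NormedAddCommGroup V] [InnerProductSpace ℝ V] [FiniteDimensional ℝ V]
  [MeasurableSpace V] [BorelSpace V]

lemma integrable_exp_neg_mul_norm_sq {b : ℝ} (hb : 0 < b) :
    Integrable fun t : V ↦ exp (-(b * ‖t‖ ^ 2)) := by
  have hcexp := (GaussianFourier.integrable_cexp_neg_mul_sq_norm_add (V := V) (b := b)
    (by simpa using hb) 0 0).norm
  refine hcexp.congr (.of_forall fun t ↦ ?_)
  simp [Complex.norm_exp, ← Complex.ofReal_pow]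

lemma integrable_exp_neg_norm_map_sq_div_two {A : V →ₗ[ℝ] F} (hA : Function.Injective A) :
    Integrable fun t ↦ exp (-(‖A t‖ ^ 2 / 2)) := by
  obtain ⟨C, hC, hAC⟩ := A.exists_antilipschitzWith (LinearMap.ker_eq_bot.2 hA)
  have hcont : Continuous A := A.continuous_of_finiteDimensional
  refine (integrable_exp_neg_mul_norm_sq (b := 1 / (2 * C ^ 2)) (by positivity)).mono'
    (by fun_prop) (.of_forall fun t ↦ ?_)
  have hle : ‖t‖ ≤ C * ‖A t‖ := by simpa using hAC.le_mul_dist t 0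
  have hsq : ‖t‖ ^ 2 ≤ (C * ‖A t‖) ^ 2 := by gcongr
  rw [norm_eq_abs, abs_exp, exp_le_exp, neg_le_neg_iff, div_mul_eq_mul_div, one_mul,
    div_le_div_iff₀ (by positivity) two_pos]
  linarith

end GaussianTilt

section Bessel

variable {M E : Type*} [Fintype M] [NormedAddCommGroup E] [InnerProductSpace ℝ E]
  {z : M → E} {L κ G : ℝ} {γ : M → ℝ}

/-- A finite Bessel family with bound `L`. Only vectors `w` of the span are tested: the component
of `w` orthogonal to the span does not contribute to the left-hand side. -/
def IsBessel (z : M → E) (L : ℝ) : Prop :=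
  ∀ w ∈ Submodule.span ℝ (Set.range z), ∑ m, ⟪z m, w⟫_ℝ ^ 2 ≤ L * ‖w‖ ^ 2

lemma IsBessel.norm_sum_smul_sq_le (hz : IsBessel z L) (hL : 0 ≤ L) (a : M → ℝ) :
    ‖∑ m, a m • z m‖ ^ 2 ≤ L * ∑ m, a m ^ 2 := by
  set w := ∑ m, a m • z m with hw
  have hmem : w ∈ Submodule.span ℝ (Set.range z) :=
    Submodule.sum_smul_mem _ _ fun m _ ↦ Submodule.subset_span ⟨m, rfl⟩
  have hdual : ‖w‖ ^ 2 = ∑ m, a m * ⟪z m, w⟫_ℝ := by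
    rw [← real_inner_self_eq_norm_sq]
    nth_rw 1 [hw]
    simp only [sum_inner, real_inner_smul_left]
  have hcs : ‖w‖ ^ 2 * ‖w‖ ^ 2 ≤ (L * ∑ m, a m ^ 2) * ‖w‖ ^ 2 :=
    calc ‖w‖ ^ 2 * ‖w‖ ^ 2 = (∑ m, a m * ⟪z m, w⟫_ℝ) ^ 2 := by rw [← hdual, sq (‖w‖ ^ 2)]
      _ ≤ (∑ m, a m ^ 2) * ∑ m, ⟪z m, w⟫_ℝ ^ 2 := Finset.sum_mul_sq_le_sq_mul_sq _ _ _
      _ ≤ (∑ m, a m ^ 2) * (L * ‖w‖ ^ 2) := by gcongr; exact hz w hmem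
      _ = (L * ∑ m, a m ^ 2) * ‖w‖ ^ 2 := by ring
  rcases (sq_nonneg ‖w‖).eq_or_lt with h | h
  · rw [← h]
    positivity
  · exact le_of_mul_le_mul_right hcs h

lemma IsBessel.sum_sum_mul_inner_pow_three_le (hz : IsBessel z L) (hL : 0 ≤ L)
    (hκ : ∀ m, ‖z m‖ ^ 2 ≤ κ) (hγ : ∀ m, |γ m| ≤ G) :
    ∑ m, ∑ n, γ m * γ n * ⟪z m, z n⟫_ℝ ^ 3 ≤ Fintype.card M * (G ^ 2 * κ ^ 2 * L) := by
  have hinner (m n : M) : |⟪z m, z n⟫_ℝ| ≤ κ :=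
    (abs_real_inner_le_norm _ _).trans <| by
      linarith [two_mul_le_add_sq ‖z m‖ ‖z n‖, hκ m, hκ n]
  have hterm (m n : M) : γ m * γ n * ⟪z m, z n⟫_ℝ ^ 3 ≤ G ^ 2 * κ * ⟪z n, z m⟫_ℝ ^ 2 :=
    calc γ m * γ n * ⟪z m, z n⟫_ℝ ^ 3 ≤ |γ m * γ n * ⟪z m, z n⟫_ℝ ^ 3| := le_abs_self _
      _ = |γ m| * |γ n| * |⟪z m, z n⟫_ℝ| * ⟪z m, z n⟫_ℝ ^ 2 := by
        rw [abs_mul, abs_mul, abs_pow, pow_succ', sq_abs, ← mul_assoc]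
      _ ≤ G * G * κ * ⟪z m, z n⟫_ℝ ^ 2 := by
        have hG : 0 ≤ G := (abs_nonneg _).trans (hγ m)
        gcongr
        exacts [hγ m, hγ n, hinner m n]
      _ = G ^ 2 * κ * ⟪z n, z m⟫_ℝ ^ 2 := by rw [real_inner_comm]; ring
  have hrow (m : M) : ∑ n, γ m * γ n * ⟪z m, z n⟫_ℝ ^ 3 ≤ G ^ 2 * κ ^ 2 * L :=
    calc ∑ n, γ m * γ n * ⟪z m, z n⟫_ℝ ^ 3 ≤ G ^ 2 * κ * ∑ n, ⟪z n, z m⟫_ℝ ^ 2 := by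
          rw [Finset.mul_sum]
          exact Finset.sum_le_sum fun n _ ↦ hterm m n
      _ ≤ G ^ 2 * κ * (L * κ) := by
        have hκ0 : 0 ≤ κ := (sq_nonneg _).trans (hκ m)
        gcongr
        refine (hz (z m) (Submodule.subset_span ⟨m, rfl⟩)).trans ?_
        gcongr
        exact hκ m
      _ = G ^ 2 * κ ^ 2 * L := by ring
  simpa using Finset.sum_le_card_nsmul Finset.univ _ _ fun m _ ↦ hrow m

lemma IsBessel.sum_sum_mul_wick_cube_le (hz : IsBessel z L) (hL : 0 ≤ L)
    (hκ : ∀ m, ‖z m‖ ^ 2 ≤ κ) (hγ : ∀ m, |γ m| ≤ G) :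
    ∑ m, ∑ n, γ m * γ n *
        (9 * ‖z m‖ ^ 2 * ‖z n‖ ^ 2 * ⟪z m, z n⟫_ℝ + 6 * ⟪z m, z n⟫_ℝ ^ 3) ≤
      15 * Fintype.card M * G ^ 2 * κ ^ 2 * L := by
  let a (m : M) : ℝ := γ m * ‖z m‖ ^ 2
  have ha (m : M) : a m ^ 2 ≤ G ^ 2 * κ ^ 2 := by
    rw [mul_pow, ← sq_abs (γ m)]
    have := hγ m
    have := hκ m
    gcongr
  have hsplit : ∑ m, ∑ n, γ m * γ n *
      (9 * ‖z m‖ ^ 2 * ‖z n‖ ^ 2 * ⟪z m, z n⟫_ℝ + 6 * ⟪z m, z n⟫_ℝ ^ 3) =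
      9 * ‖∑ m, a m • z m‖ ^ 2 + 6 * ∑ m, ∑ n, γ m * γ n * ⟪z m, z n⟫_ℝ ^ 3 := by
    simp only [← real_inner_self_eq_norm_sq (∑ m, a m • z m), sum_inner, inner_sum,
      real_inner_smul_left, real_inner_smul_right, Finset.mul_sum, ← Finset.sum_add_distrib, a]
    exact Finset.sum_congr rfl fun m _ ↦ Finset.sum_congr rfl fun n _ ↦ by
      rw [real_inner_comm (z n)]
      ring
  have hlinear : ‖∑ m, a m • z m‖ ^ 2 ≤ L * (Fintype.card M * (G ^ 2 * κ ^ 2)) := by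
    refine (hz.norm_sum_smul_sq_le hL a).trans ?_
    gcongr
    simpa using Finset.sum_le_card_nsmul Finset.univ _ _ fun m _ ↦ ha m
  rw [hsplit]
  linarith [hz.sum_sum_mul_inner_pow_three_le hL hκ hγ]

end Bessel

section CubicForm

variable {V F M : Type*} [NormedAddCommGroup V] [InnerProductSpace ℝ V] [FiniteDimensional ℝ V]
  [NormedAddCommGroup F] [InnerProductSpace ℝ F] [Fintype M]

lemma exists_forall_eq_inner_map {A : V →ₗ[ℝ] F} (hA : Function.Injective A) (X : V →ₗ[ℝ] ℝ) :
    ∃ s, ∀ t, X t = ⟪A s, A t⟫_ℝ := by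
  let B : V →ₗ[ℝ] Module.Dual ℝ V := (innerₗ F).compl₁₂ A A
  have hB : Function.Injective B := by
    refine (injective_iff_map_eq_zero B).2 fun s hs ↦ ?_
    have hself : ⟪A s, A s⟫_ℝ = 0 := LinearMap.congr_fun hs s
    exact (map_eq_zero_iff A hA).1 (inner_self_eq_zero.1 hself)
  obtain ⟨s, hs⟩ := (LinearMap.injective_iff_surjective_of_finrank_eq_finrank
    Subspace.dual_finrank_eq.symm).1 hB X
  exact ⟨s, fun t ↦ (LinearMap.congr_fun hs t).symm⟩

variable [MeasurableSpace V] [BorelSpace V]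

theorem integral_sq_sum_mul_cube_gaussianTilt_le {A : V →ₗ[ℝ] F} (hA : Function.Injective A)
    {X : M → V →ₗ[ℝ] ℝ} {L κ : ℝ} (hL : 0 ≤ L) (hκ : 0 ≤ κ)
    (hXL : ∀ t, ∑ m, X m t ^ 2 ≤ L * ‖A t‖ ^ 2) (hXκ : ∀ m t, X m t ^ 2 ≤ κ * ‖A t‖ ^ 2)
    {γ : M → ℝ} {G : ℝ} (hγ : ∀ m, |γ m| ≤ G) :
    ∫ t, (∑ m, γ m * X m t ^ 3) ^ 2 ∂gaussianTilt volume A ≤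
      15 * Fintype.card M * G ^ 2 * κ ^ 2 * L := by
  choose s hs using fun m ↦ exists_forall_eq_inner_map hA (X m)
  have hbessel : IsBessel (fun m ↦ A (s m)) L := by
    intro w hw
    obtain ⟨u, rfl⟩ : w ∈ LinearMap.range A :=
      (Submodule.span_le (p := LinearMap.range A)).2
        (Set.range_subset_iff.2 fun m ↦ A.mem_range_self (s m)) hw
    simpa only [hs] using hXL u
  have hnorm (m : M) : ‖A (s m)‖ ^ 2 ≤ κ := by
    have h := hXκ m (s m)
    rw [hs, real_inner_self_eq_norm_sq] at h
    nlinarith [sq_nonneg ‖A (s m)‖]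
  have hwick (m n : M) := integrable_cube_mul_cube_gaussianTilt_and_integral_eq
    (integrable_exp_neg_norm_map_sq_div_two hA) (s m) (s n)
  simp only [← hs] at hwick
  have hexpand (t : V) : (∑ m, γ m * X m t ^ 3) ^ 2 =
      ∑ m, ∑ n, γ m * γ n * (X m t ^ 3 * X n t ^ 3) := by
    rw [sq, Finset.sum_mul_sum]
    exact Finset.sum_congr rfl fun m _ ↦ Finset.sum_congr rfl fun n _ ↦ by ring
  have hint (m n : M) := (hwick m n).1.const_mul (γ m * γ n)
  refine le_of_eq_of_le ?_ (hbessel.sum_sum_mul_wick_cube_le hL hnorm hγ)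
  simp only [hexpand]
  rw [integral_finsetSum _ fun m _ ↦ integrable_finsetSum _ fun n _ ↦ hint m n]
  refine Finset.sum_congr rfl fun m _ ↦ ?_
  rw [integral_finsetSum _ fun n _ ↦ hint m n]
  refine Finset.sum_congr rfl fun n _ ↦ ?_
  rw [integral_const_mul, (hwick m n).2, hs]

end CubicForm

section WeightedFamily

variable {V M : Type*}

section

variable [AddCommGroup V] [Module ℝ V]

/-- The linear map `t ↦ (√(α m) * X m t)_m`, which turns the quadratic form
`∑ m, α m * X m t ^ 2` with nonnegative weights into a squared Euclidean norm. -/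
def weightedMap (α : M → ℝ) (X : M → V →ₗ[ℝ] ℝ) : V →ₗ[ℝ] EuclideanSpace ℝ M :=
  (WithLp.linearEquiv 2 ℝ (M → ℝ)).symm.toLinearMap ∘ₗ LinearMap.pi fun m ↦ √(α m) • X m

variable {α : M → ℝ} {X : M → V →ₗ[ℝ] ℝ} {r : ℝ}

lemma injective_weightedMap (hα : ∀ m, 0 < α m) (hX : ∀ t, (∀ m, X m t = 0) → t = 0) :
    Function.Injective (weightedMap α X) := by
  refine (injective_iff_map_eq_zero _).2 fun t ht ↦ hX t fun m ↦ ?_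
  have hm : √(α m) * X m t = 0 := congrArg (fun w : EuclideanSpace ℝ M ↦ w m) ht
  exact (mul_eq_zero.1 hm).resolve_left (sqrt_pos.2 (hα m)).ne'

variable [Fintype M]

lemma norm_weightedMap_sq (hα : ∀ m, 0 ≤ α m) (t : V) :
    ‖weightedMap α X t‖ ^ 2 = ∑ m, α m * X m t ^ 2 := by
  simp [weightedMap, EuclideanSpace.real_norm_sq_eq, mul_pow, sq_sqrt (hα _)]

lemma sum_sq_le_inv_mul_norm_weightedMap_sq (hr : 0 < r) (hα : ∀ m, r ≤ α m) (t : V) :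
    ∑ m, X m t ^ 2 ≤ r⁻¹ * ‖weightedMap α X t‖ ^ 2 := by
  rw [norm_weightedMap_sq fun m ↦ hr.le.trans (hα m), inv_mul_eq_div, le_div_iff₀' hr,
    Finset.mul_sum]
  gcongr with m
  exact hα m

end

lemma integral_mul_exp_div_integral_exp [MeasurableSpace V] (μ : Measure V) (f g : V → ℝ) :
    (∫ t, f t * exp (g t) ∂μ) / ∫ t, exp (g t) ∂μ = ∫ t, f t ∂μ.tilted g := by
  rw [integral_tilted, ← integral_div]
  exact integral_congr_ae (.of_forall fun t ↦ by simp only [smul_eq_mul]; ring)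

variable [Fintype M] [NormedAddCommGroup V] [InnerProductSpace ℝ V]
  [FiniteDimensional ℝ V] [MeasurableSpace V] [BorelSpace V]

theorem integral_sq_sum_cube_mul_exp_div_le {X : M → V →ₗ[ℝ] ℝ}
    (hX : ∀ t, (∀ m, X m t = 0) → t = 0) {α : M → ℝ} {r : ℝ} (hr : 0 < r) (hα : ∀ m, r ≤ α m)
    {K : ℝ} (hK : 0 ≤ K) (hXK : ∀ m t, X m t ^ 2 ≤ K * ∑ n, X n t ^ 2)
    {β : M → ℝ} {θ : ℝ} (hβ : ∀ m, |β m| ≤ θ) :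
    (∫ t, (∑ m, (β m * X m t) ^ 3) ^ 2 * exp (-(1 / 2 * ∑ m, α m * X m t ^ 2))) /
        ∫ t, exp (-(1 / 2 * ∑ m, α m * X m t ^ 2)) ≤
      15 * Fintype.card M * θ ^ 6 * K ^ 2 / r ^ 3 := by
  have hα0 (m : M) : 0 < α m := hr.trans_le (hα m)
  have hsum := sum_sq_le_inv_mul_norm_weightedMap_sq (X := X) hr hα
  have hle (m : M) (t : V) : X m t ^ 2 ≤ K * r⁻¹ * ‖weightedMap α X t‖ ^ 2 := by
    rw [mul_assoc]
    exact (hXK m t).trans (by gcongr; exact hsum t)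
  have hcube (m : M) : |β m ^ 3| ≤ θ ^ 3 := by
    rw [abs_pow]
    have := hβ m
    gcongr
  rw [integral_mul_exp_div_integral_exp]
  have hbound := integral_sq_sum_mul_cube_gaussianTilt_le (injective_weightedMap hα0 hX)
    (by positivity) (by positivity) hsum hle hcube
  simp only [gaussianTilt, norm_weightedMap_sq fun m ↦ (hα0 m).le] at hbound
  simp only [mul_pow, one_div_mul_eq_div]
  refine hbound.trans_eq ?_
  field_simp

end WeightedFamily

section ProductSum

variable {ι : Type*} [Fintype ι] {κ : ι → Type*} (f : ∀ i, κ i → ℝ)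

lemma sum_apply_update [DecidableEq ι] (n : ∀ i, κ i) (j : ι) (a : κ j) :
    ∑ i, f i (Function.update n j a i) = ∑ i, f i (n i) - f j (n j) + f j a := by
  simp only [Function.apply_update f, Finset.sum_update_of_mem (Finset.mem_univ j),
    Finset.sum_eq_add_sum_sdiff_singleton_of_mem (Finset.mem_univ j) fun i ↦ f i (n i)]
  ring

lemma eq_zero_of_forall_sum_apply_eq_zero (hf : ∀ n : ∀ i, κ i, ∑ i, f i (n i) = 0) (j₀ : ι)
    (p : ∀ i, κ i) (hp : ∀ j ≠ j₀, f j (p j) = 0) (j : ι) (a : κ j) : f j a = 0 := by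
  classical
  have hbase : f j (p j) = 0 := by
    rcases eq_or_ne j j₀ with rfl | hj
    · rw [← hf p, Fintype.sum_eq_single j hp]
    · exact hp j hj
  have hupdate := hf (Function.update p j a)
  rwa [sum_apply_update, hf p, hbase, sub_zero, zero_add] at hupdate

variable [DecidableEq ι] [∀ i, Fintype (κ i)]

lemma sum_comp_update_le {g : (∀ i, κ i) → ℝ} (hg : ∀ n, 0 ≤ g n) (j : ι) (a : κ j) :
    ∑ n, g (Function.update n j a) ≤ Fintype.card (κ j) * ∑ n, g n := by
  classical
  have hinj : Function.Injective fun n : ∀ i, κ i ↦ (n j, Function.update n j a) := by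
    intro n n' h
    simpa using congrArg (fun p ↦ Function.update p.2 j p.1) h
  calc ∑ n, g (Function.update n j a)
      = ∑ p ∈ Finset.univ.map ⟨_, hinj⟩, g p.2 := by simp
    _ ≤ ∑ p : κ j × ∀ i, κ i, g p.2 :=
      Finset.sum_le_univ_sum_of_nonneg fun p ↦ hg p.2
    _ = Fintype.card (κ j) * ∑ n, g n := by simp [Fintype.sum_prod_type]

lemma card_mul_sum_apply_eq (m : ∀ i, κ i) :
    (Fintype.card (∀ i, κ i) : ℝ) * ∑ i, f i (m i) =
      ∑ j, ∑ n : ∀ i, κ i, ∑ i, f i (Function.update n j (m j) i) -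
        Fintype.card ι * ∑ n : ∀ i, κ i, ∑ i, f i (n i) + ∑ n : ∀ i, κ i, ∑ i, f i (n i) := by
  have hswap : ∑ j, ∑ n : ∀ i, κ i, f j (n j) = ∑ n : ∀ i, κ i, ∑ j, f j (n j) :=
    Finset.sum_comm
  simp only [sum_apply_update, Finset.sum_add_distrib, Finset.sum_sub_distrib, hswap,
    Finset.sum_const, Finset.card_univ, nsmul_eq_mul, ← Finset.mul_sum]
  ring

lemma card_mul_abs_sum_apply_le {k : ℝ} (hk1 : 1 ≤ k) (hk : ∀ j, (Fintype.card (κ j) : ℝ) ≤ k)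
    (m : ∀ i, κ i) :
    Fintype.card (∀ i, κ i) * |∑ i, f i (m i)| ≤ (2 * Fintype.card ι + 1) *
      √(Fintype.card (∀ i, κ i) * (k * ∑ n : ∀ i, κ i, (∑ i, f i (n i)) ^ 2)) := by
  set S : ℝ := ∑ n : ∀ i, κ i, (∑ i, f i (n i)) ^ 2
  set Q : ℝ := √(Fintype.card (∀ i, κ i) * (k * S))
  have hS : 0 ≤ S := by positivity
  have cauchy {g : (∀ i, κ i) → ℝ} (hg : ∑ n, g n ^ 2 ≤ k * S) : |∑ n, g n| ≤ Q := by
    refine abs_le_sqrt (sq_sum_le_card_mul_sum_sq.trans ?_)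
    rw [Finset.card_univ]
    gcongr
  have htotal : |∑ n : ∀ i, κ i, ∑ i, f i (n i)| ≤ Q := cauchy (le_mul_of_one_le_left hS hk1)
  have hslice (j : ι) : |∑ n : ∀ i, κ i, ∑ i, f i (Function.update n j (m j) i)| ≤ Q :=
    cauchy <| (sum_comp_update_le (g := fun n ↦ (∑ i, f i (n i)) ^ 2)
      (fun _ ↦ sq_nonneg _) j (m j)).trans (mul_le_mul_of_nonneg_right (hk j) hS)
  have hslices : |∑ j, ∑ n : ∀ i, κ i, ∑ i, f i (Function.update n j (m j) i)| ≤
      Fintype.card ι * Q := by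
    refine (Finset.abs_sum_le_sum_abs _ _).trans ?_
    simpa using Finset.sum_le_card_nsmul Finset.univ _ _ fun j _ ↦ hslice j
  rw [← abs_of_nonneg (Nat.cast_nonneg (α := ℝ) (Fintype.card (∀ i, κ i))), ← abs_mul,
    card_mul_sum_apply_eq f m]
  refine (abs_add_le _ _).trans ((add_le_add_left (abs_sub _ _) _).trans ?_)
  rw [abs_mul, Nat.abs_cast]
  linarith [mul_le_mul_of_nonneg_left htotal (Nat.cast_nonneg (Fintype.card ι))]

theorem sq_sum_apply_le {k : ℝ} (hk1 : 1 ≤ k) (hk : ∀ j, (Fintype.card (κ j) : ℝ) ≤ k)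
    (m : ∀ i, κ i) :
    (∑ i, f i (m i)) ^ 2 ≤ (2 * Fintype.card ι + 1) ^ 2 * k / Fintype.card (∀ i, κ i) *
      ∑ n : ∀ i, κ i, (∑ i, f i (n i)) ^ 2 := by
  have : Nonempty (∀ i, κ i) := ⟨m⟩
  set N : ℝ := (Fintype.card (∀ i, κ i) : ℝ)
  have hN : 0 < N := Nat.cast_pos.2 Fintype.card_pos
  have hsq := pow_le_pow_left₀ (by positivity) (card_mul_abs_sum_apply_le f hk1 hk m) 2
  rw [mul_pow, mul_pow, sq_abs, sq_sqrt (by positivity)] at hsq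
  rw [div_mul_eq_mul_div, le_div_iff₀ hN]
  refine le_of_mul_le_mul_left ?_ hN
  linarith

end ProductSum

section AxisSums

variable {kk : Fin ν → ℕ} (hk : ∀ j, 0 < kk j)

lemma linF_apply (m : MIdx kk) (t : Spc kk) : linF kk m t = ∑ j, t ⟨j, m j⟩ := by
  rw [linF, LinearMap.sum_apply]
  rfl

variable {hk} in
lemma eq_zero_of_mem_Lsub_of_forall_linF_eq_zero (hν : 0 < ν) {t : Spc kk} (ht : t ∈ Lsub kk hk)
    (hlin : ∀ m, linF kk m t = 0) : t = 0 := by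
  have hlast (j : Fin ν) (hj : j ≠ ⟨0, hν⟩) :
      t ⟨j, ⟨kk j - 1, Nat.sub_lt (hk j) one_pos⟩⟩ = 0 :=
    (Submodule.mem_iInf _).1 ht ⟨j, fun h ↦ hj (Fin.ext h)⟩
  ext ⟨j, a⟩
  exact eq_zero_of_forall_sum_apply_eq_zero (fun j a ↦ t ⟨j, a⟩)
    (fun m ↦ linF_apply m t ▸ hlin m) ⟨0, hν⟩ _ hlast j a

lemma linF_sq_le {k : ℝ} (hk1 : 1 ≤ k) (hkk : ∀ j, (kk j : ℝ) ≤ k) (m : MIdx kk) (t : Spc kk) :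
    linF kk m t ^ 2 ≤
      (2 * ν + 1) ^ 2 * k / Fintype.card (MIdx kk) * ∑ n, linF kk n t ^ 2 := by
  simpa only [linF_apply, Fintype.card_fin] using
    sq_sum_apply_le (fun j a ↦ t ⟨j, a⟩) hk1 (fun j ↦ by simpa using hkk j) m

theorem integral_Upoly_sq_mul_exp_div_le (hν : 0 < ν) {k : ℝ} (hkk : ∀ j, (kk j : ℝ) ≤ k)
    {α : MIdx kk → ℝ} {r : ℝ} (hr : 0 < r) (hα : ∀ m, r ≤ α m)
    {β : MIdx kk → ℝ} {θ : ℝ} (hβ : ∀ m, |β m| ≤ θ) :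
    (∫ t : Lsub kk hk, Upoly kk β t ^ 2 * exp (-qform kk α t)) /
        ∫ t : Lsub kk hk, exp (-qform kk α t) ≤
      15 * (2 * ν + 1) ^ 4 * θ ^ 6 / r ^ 3 * (k ^ 2 / ∏ j, (kk j : ℝ)) := by
  have hk1 : 1 ≤ k := le_trans (mod_cast hk ⟨0, hν⟩) (hkk ⟨0, hν⟩)
  have hN : (Fintype.card (MIdx kk) : ℝ) = ∏ j, (kk j : ℝ) := by simp [Fintype.card_pi]
  have hN0 : 0 < ∏ j, (kk j : ℝ) := Finset.prod_pos fun j _ ↦ Nat.cast_pos.2 (hk j)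
  have hbound := integral_sq_sum_cube_mul_exp_div_le
    (X := fun m ↦ (linF kk m).comp (Lsub kk hk).subtype)
    (fun t ht ↦ Subtype.ext (eq_zero_of_mem_Lsub_of_forall_linF_eq_zero hν t.2 ht))
    hr hα (by positivity) (fun m t ↦ linF_sq_le hk1 hkk m t) hβ
  refine hbound.trans_eq ?_
  rw [hN]
  field_simp

end AxisSums

theorem statement14_general (hν : 0 < ν) (θ : ℝ) {ω r : ℝ} (hω : 0 < ω) (hr : 0 < r) :
    ∃ Γ : ℝ, 0 < Γ ∧
      ∀ (kk : Fin ν → ℕ) (hk : ∀ j, 0 < kk j) (k : ℝ),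
        (∀ j, ω * k ≤ kk j) → (∀ j, (kk j : ℝ) ≤ k) →
        ∀ α : MIdx kk → ℝ, (∀ m, r ≤ α m) → ∀ β : MIdx kk → ℝ, (∀ m, |β m| ≤ θ) →
          (∫ t : Lsub kk hk, Upoly kk β t ^ 2 * exp (-qform kk α t)) /
              ∫ t : Lsub kk hk, exp (-qform kk α t) ≤
            Γ * k ^ ((2 : ℝ) - ν) := by
  set C : ℝ := 15 * (2 * ν + 1) ^ 4 * θ ^ 6 / r ^ 3
  have hC0 : 0 ≤ C := by positivity
  refine ⟨(C + 1) / ω ^ ν, by positivity, fun kk hk k hlow hup α hα β hβ ↦ ?_⟩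
  have hk0 : 0 < k := (Nat.cast_pos.2 (hk ⟨0, hν⟩)).trans_le (hup ⟨0, hν⟩)
  have hcard : (ω * k) ^ ν ≤ ∏ j, (kk j : ℝ) := by
    simpa using Finset.prod_le_prod (s := Finset.univ) (fun _ _ ↦ by positivity) fun j _ ↦ hlow j
  calc _ ≤ C * (k ^ 2 / ∏ j, (kk j : ℝ)) := integral_Upoly_sq_mul_exp_div_le hk hν hup hr hα hβ
    _ ≤ (C + 1) * (k ^ 2 / (ω * k) ^ ν) := by gcongr; linarith
    _ = (C + 1) / ω ^ ν * k ^ ((2 : ℝ) - ν) := by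
      rw [rpow_sub hk0, rpow_natCast, rpow_two, mul_pow]
      field_simp

/-- For `ν ≥ 3` and `|β_m| ≤ θ`, if `t` is drawn from the distribution
on `ℒ` with density proportional to `e^{−q(t)}` and `U = ∑_m u_m³` with
`u_m = β_m(τ_{1,m_1}+⋯+τ_{ν,m_ν})`, then there is `Γ = Γ(θ,ν,ω,R,r) > 0` with
`E[U²] ≤ Γ k^{−ν+2}`. -/
theorem statement14 (ν : ℕ) (hν : 3 ≤ ν) (θ ω r R : ℝ)
    (hθ : 0 ≤ θ) (hω0 : 0 < ω) (hω1 : ω ≤ 1) (hr : 0 < r) (hrR : r ≤ R) :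
    ∃ Γ : ℝ, 0 < Γ ∧
      ∀ (kk : Fin ν → ℕ) (hkk : ∀ j, 2 ≤ kk j) (hk : ∀ j, 0 < kk j) (k : ℝ),
        1 ≤ ω * k → (∀ j, ω * k ≤ kk j) → (∀ j, (kk j : ℝ) ≤ k) →
        ∀ (α : MIdx kk → ℝ), (∀ m, r ≤ α m) → (∀ m, α m ≤ R) →
        ∀ (β : MIdx kk → ℝ), (∀ m, |β m| ≤ θ) →
          (∫ t : ↥(Lsub kk hk),
              (Upoly kk β (t : Spc kk))^2 * Real.exp (-(qform kk α (t : Spc kk)))) /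
            (∫ t : ↥(Lsub kk hk), Real.exp (-(qform kk α (t : Spc kk))))
            ≤ Γ * k ^ ((2 : ℝ) - (ν : ℝ)) := by
  obtain ⟨Γ, hΓ, hbound⟩ := statement14_general (by omega : 0 < ν) θ hω0 hr
  exact ⟨Γ, hΓ, fun kk _ hk k _ hlow hup α hα _ ↦ hbound kk hk k hlow hup α hα⟩
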